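/- Time-reversal symmetry of the quantum baker's map: let Ω be the antilinear involution on L²(ℝ) defined by Ω f := conj(𝓕_ħ f). Then for every f ∈ L²(ℝ), Ω(F(Ω f)) = F* f, where F* is the adjoint (equivalently, since F is unitary, the inverse) of the baker's map propagator F. -/

import Mathlib

/-!
The Fourier transform exchanges the two halves of the baker's map. Write `C` for complex
conjugation, `a(x)` for the position multiplier of `A = L + X^{-1} R` (`posPhase`), and `m(p)`
for the momentum multiplier of `B = E_p + Y^{-1/2} O_p` (`momPhase`); that `B` is such a
multiplier is the translation rule `fourier_translate`. Both are unimodular and `m(p) = a(p/2)`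
(`momPhase_eq`), so `S a = m S` as operators on functions.

Two properties of the transform are used: `C 𝓕 = 𝓕⁻¹ C` (`star_fourier`, i.e. `Ω² = 1`), which
follows from the symmetry of `∫ f g` under `𝓕` and unitarity, and `S 𝓕 S = 𝓕`
(`dilate_fourier_dilate`). Both are checked by the integral formula on `L¹ ∩ L²` and extended by
density. With `U = S A B` they give
`B Ω U = 𝓕⁻¹ m C S A B = 𝓕⁻¹ S C B` and then
`U Ω U = S A 𝓕⁻¹ S C B = m S 𝓕⁻¹ S C B = m 𝓕⁻¹ C B = m C 𝓕 B = C 𝓕 = Ω`.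
As `U` is an isometry, `U* U = 1`, and applying `U*` to `U Ω U Ω f = f` yields `Ω U Ω f = U* f`.
-/

open MeasureTheory Filter Topology

noncomputable section

/-- The Hilbert space `L²(ℝ, ℂ)` with inner product `⟪f,g⟫ = ∫ conj(f x) · g x dx`. -/
abbrev HL2 : Type := MeasureTheory.Lp ℂ 2 (MeasureTheory.volume : MeasureTheory.Measure ℝ)

/-- Indicator of `⋃ₖ [k, k+1/2)`. -/
def chiL (x : ℝ) : ℂ := if Int.fract x < 1/2 then 1 else 0

/-- Indicator of `⋃ₖ [k+1/2, k+1)`. -/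
def chiR (x : ℝ) : ℂ := if 1/2 ≤ Int.fract x then 1 else 0

/-- Indicator of `⋃ₖ [2k, 2k+1)`. -/
def chiE (p : ℝ) : ℂ := if Even ⌊p⌋ then 1 else 0

/-- Indicator of `⋃ₖ [2k+1, 2k+2)`. -/
def chiO (p : ℝ) : ℂ := if Odd ⌊p⌋ then 1 else 0

/-- The `hbar`-scaled Fourier integral formula `(2πhbar)^{−1/2} ∫ e^{−ipx/hbar} f(x) dx`. -/
def fourierFormula (hbar : ℝ) (f : ℝ → ℂ) (p : ℝ) : ℂ :=
  ((Real.sqrt (2 * Real.pi * hbar) : ℝ) : ℂ)⁻¹ *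
    ∫ x : ℝ, Complex.exp (-(Complex.I * (p : ℂ) * (x : ℂ) / (hbar : ℂ))) * f x

/-! ### Multipliers -/

/-- The position-space multiplier of `L + X^{-1} R`. -/
def posPhase (hbar x : ℝ) : ℂ :=
  chiL x + Complex.exp (Complex.I * ((-1 : ℝ) : ℂ) * x / hbar) * chiR x

/-- The momentum-space multiplier of `E_p + Y^{-1/2} O_p`. -/
def momPhase (hbar p : ℝ) : ℂ :=
  chiE p + Complex.exp (Complex.I * ((-(1 / 2) : ℝ) : ℂ) * p / hbar) * chiO p

lemma even_floor_iff_fract_half (p : ℝ) : Even ⌊p⌋ ↔ Int.fract (p / 2) < 1 / 2 := by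
  have h1 := Int.floor_le (p / 2)
  have h2 := Int.lt_floor_add_one (p / 2)
  rw [Int.fract]
  constructor
  · rintro ⟨k, hk⟩
    rw [Int.floor_eq_iff] at hk
    push_cast at hk
    have : ⌊p / 2⌋ = k := by
      rw [Int.floor_eq_iff]; constructor <;> linarith [hk.1, hk.2]
    rw [this]; linarith [hk.2]
  · intro h
    refine ⟨⌊p / 2⌋, ?_⟩
    rw [Int.floor_eq_iff]
    push_cast
    constructor <;> linarith

/-- Dilation by `2` carries the momentum multiplier to the position multiplier; this is the
self-duality of the baker's map. -/
lemma momPhase_eq (hbar p : ℝ) : momPhase hbar p = posPhase hbar (p / 2) := by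
  have hE : chiE p = chiL (p / 2) := by
    simp only [chiE, chiL, even_floor_iff_fract_half]
  have hO : chiO p = chiR (p / 2) := by
    simp only [chiO, chiR, ← Int.not_even_iff_odd, even_floor_iff_fract_half, not_lt]
  rw [momPhase, posPhase, hE, hO]
  congr 3
  push_cast
  ring

lemma norm_exp_phase (hbar s x : ℝ) : ‖Complex.exp (Complex.I * (s : ℂ) * x / hbar)‖ = 1 := by
  rw [show Complex.I * (s : ℂ) * x / hbar = ((s * x / hbar : ℝ) : ℂ) * Complex.I by
    push_cast; ring]
  exact Complex.norm_exp_ofReal_mul_I _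

lemma norm_posPhase (hbar x : ℝ) : ‖posPhase hbar x‖ = 1 := by
  by_cases h : Int.fract x < 1 / 2
  · simp only [posPhase, chiL, chiR, if_pos h, if_neg (not_le.mpr h), mul_zero, add_zero,
      norm_one]
  · simp only [posPhase, chiL, chiR, if_neg h, if_pos (not_lt.mp h), mul_one, zero_add]
    exact norm_exp_phase _ _ _

lemma mul_conj_of_norm_one {z : ℂ} (h : ‖z‖ = 1) : z * star z = 1 := by
  rw [Complex.star_def, Complex.mul_conj, Complex.normSq_eq_norm_sq, h]
  norm_num

lemma ae_comp_half {P : ℝ → Prop} (h : ∀ᵐ x, P x) : ∀ᵐ x : ℝ, P (x / 2) := by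
  have hq : Measure.QuasiMeasurePreserving (fun x : ℝ => (1 / 2) * x) volume volume := by
    refine ⟨by fun_prop, ?_⟩
    rw [Real.map_volume_mul_left (by norm_num)]
    exact Measure.smul_absolutelyContinuous
  filter_upwards [hq.ae h] with x hx
  rwa [show x / 2 = 1 / 2 * x by ring]

/-! ### Density and the bilinear pairing -/

/-- Two continuous maps on `L²` that agree on `L¹ ∩ L²` are equal. -/
lemma eq_of_eq_on_integrable {E : Type*} [TopologicalSpace E] [T2Space E] {φ ψ : HL2 → E}
    (hφ : Continuous φ) (hψ : Continuous ψ)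
    (h : ∀ f : HL2, Integrable (⇑f) volume → φ f = ψ f) (f : HL2) : φ f = ψ f := by
  refine (Lp.simpleFunc.denseRange (E := ℂ) (p := 2) (μ := (volume : Measure ℝ))
    (by norm_num)).induction_on f (isClosed_eq hφ hψ) fun a => h _ ?_
  exact ((SimpleFunc.memLp_iff_integrable (by norm_num) (by norm_num)).1
    (Lp.simpleFunc.memLp a)).congr (Lp.simpleFunc.toSimpleFunc_eq_toFun a)

/-- The pairing `⟪star f, g⟫` is the bilinear form `∫ f g`. -/
lemma inner_star_eq (f g : HL2) : inner ℂ (star f) g = ∫ x, f x * g x := by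
  rw [L2.inner_def]
  refine integral_congr_ae ?_
  filter_upwards [Lp.coeFn_star f] with x hx
  rw [RCLike.inner_apply, hx, Pi.star_apply]
  simp [mul_comm]

lemma inner_star_comm (f g : HL2) : inner ℂ (star f) g = inner ℂ (star g) f := by
  simp only [inner_star_eq, mul_comm]

lemma fourierFormula_flip (hbar : ℝ) {f g : ℝ → ℂ} (hf : Integrable f) (hg : Integrable g) :
    ∫ p, fourierFormula hbar f p * g p = ∫ x, f x * fourierFormula hbar g x := by
  have key : Integrable (Function.uncurry fun p x : ℝ =>
      Complex.exp (-(Complex.I * (p : ℂ) * (x : ℂ) / (hbar : ℂ))) * (g p * f x))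
      (volume.prod volume) := by
    refine (hg.mul_prod hf).bdd_mul (c := 1) ?_ (ae_of_all _ fun z => ?_)
    · exact Continuous.aestronglyMeasurable (by fun_prop)
    · have := norm_exp_phase hbar (-z.1) z.2
      rw [show Complex.I * ((-z.1 : ℝ) : ℂ) * z.2 / hbar
        = -(Complex.I * (z.1 : ℂ) * (z.2 : ℂ) / (hbar : ℂ)) by push_cast; ring] at this
      exact this.le
  have hsw := integral_integral_swap key
  have h1 : ∀ p, fourierFormula hbar f p * g p = ((Real.sqrt (2 * Real.pi * hbar) : ℝ) : ℂ)⁻¹ *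
      ∫ x : ℝ, Complex.exp (-(Complex.I * (p : ℂ) * (x : ℂ) / (hbar : ℂ))) * (g p * f x) := by
    intro p
    rw [fourierFormula, mul_assoc, ← integral_mul_const]
    congr 2; ext x; ring
  have h2 : ∀ x, f x * fourierFormula hbar g x = ((Real.sqrt (2 * Real.pi * hbar) : ℝ) : ℂ)⁻¹ *
      ∫ p : ℝ, Complex.exp (-(Complex.I * (p : ℂ) * (x : ℂ) / (hbar : ℂ))) * (g p * f x) := by
    intro x
    rw [fourierFormula, mul_left_comm, ← integral_const_mul]
    congr 2; ext p
    rw [show Complex.I * (x : ℂ) * (p : ℂ) = Complex.I * (p : ℂ) * (x : ℂ) by ring]; ring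
  simp only [h1, h2]
  rw [integral_const_mul, integral_const_mul, hsw]

lemma fourierFormula_congr (hbar : ℝ) {f g : ℝ → ℂ} (h : f =ᵐ[volume] g) (p : ℝ) :
    fourierFormula hbar f p = fourierFormula hbar g p := by
  rw [fourierFormula, fourierFormula]
  congr 1
  refine integral_congr_ae ?_
  filter_upwards [h] with x hx
  rw [hx]

/-! ### Fourier transform: conjugation, translation, dilation -/

/-- The bilinear form `∫ f g` is symmetric under the Fourier transform; as the transform is
unitary, this says that its inverse is its conjugate by complex conjugation. -/
lemma star_fourier (hbar : ℝ) (𝓕 : HL2 ≃ₗᵢ[ℂ] HL2)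
    (h𝓕 : ∀ f : HL2, Integrable (⇑f) volume → ⇑(𝓕 f) =ᵐ[volume] fourierFormula hbar (⇑f))
    (f : HL2) : star (𝓕 f) = 𝓕.symm (star f) := by
  have h0 : ∀ f g : HL2, Integrable (⇑f) volume → Integrable (⇑g) volume →
      inner ℂ (star (𝓕 f)) g = inner ℂ (star f) (𝓕 g) := by
    intro f g hf hg
    rw [inner_star_eq, inner_star_eq]
    calc _ = ∫ p, fourierFormula hbar f p * g p :=
          integral_congr_ae (by filter_upwards [h𝓕 f hf] with x hx; rw [hx])
      _ = ∫ x, f x * fourierFormula hbar g x := fourierFormula_flip hbar hf hg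
      _ = _ := integral_congr_ae (by filter_upwards [h𝓕 g hg] with x hx; rw [hx])
  have hc := 𝓕.continuous
  have h1 : ∀ f g : HL2, Integrable (⇑f) volume →
      inner ℂ (star (𝓕 f)) g = inner ℂ (star f) (𝓕 g) := fun f g hf =>
    eq_of_eq_on_integrable (φ := fun g => inner ℂ (star (𝓕 f)) g)
      (ψ := fun g => inner ℂ (star f) (𝓕 g)) (by fun_prop) (by fun_prop)
      (fun g hg => h0 f g hf hg) g
  -- Swapping the factors by `inner_star_comm` places the free variable in the linear slot, so the same
  -- density argument applies to it.
  have h2 : ∀ f g : HL2, inner ℂ (star g) (𝓕 f) = inner ℂ (star (𝓕 g)) f := fun f g =>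
    eq_of_eq_on_integrable (φ := fun f => inner ℂ (star g) (𝓕 f))
      (ψ := fun f => inner ℂ (star (𝓕 g)) f) (by fun_prop) (by fun_prop)
      (fun f hf => by
        rw [inner_star_comm, h1 f g hf, inner_star_comm]) f
  refine ext_inner_right ℂ fun g => ?_
  rw [← h2, ← 𝓕.inner_map_map (𝓕.symm (star f)) g, 𝓕.apply_symm_apply]

/-- Translation becomes a phase in momentum space. -/
lemma fourier_translate (hbar : ℝ) (𝓕 : HL2 ≃ₗᵢ[ℂ] HL2)
    (h𝓕 : ∀ f : HL2, Integrable (⇑f) volume → ⇑(𝓕 f) =ᵐ[volume] fourierFormula hbar (⇑f))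
    (s : ℝ) (X Y : HL2 →L[ℂ] HL2)
    (hX : ∀ f : HL2, ⇑(X f) =ᵐ[volume] fun x => Complex.exp (Complex.I * s * x / hbar) * f x)
    (hY : ∀ f : HL2, ⇑(Y f) =ᵐ[volume] fun x => f (x + s)) (f : HL2) :
    𝓕 (Y f) = X (𝓕 f) := by
  have hc := 𝓕.continuous
  refine eq_of_eq_on_integrable (φ := fun f => 𝓕 (Y f)) (ψ := fun f => X (𝓕 f))
    (by fun_prop) (by fun_prop) (fun f hf => Lp.ext ?_) f
  have hi : Integrable (⇑(Y f)) volume := (hf.comp_add_right s).congr (hY f).symm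
  filter_upwards [h𝓕 _ hi, h𝓕 f hf, hX (𝓕 f)] with p h1 h2 h3
  rw [h1, h3, h2, fourierFormula_congr hbar (hY f), fourierFormula, fourierFormula,
    mul_left_comm (Complex.exp _), ← integral_const_mul (Complex.exp _)]
  congr 1
  rw [← integral_add_right_eq_self (fun x : ℝ => Complex.exp (Complex.I * s * p / hbar) *
    (Complex.exp (-(Complex.I * (p : ℂ) * (x : ℂ) / (hbar : ℂ))) * f x)) s]
  congr 1; ext x
  rw [← mul_assoc, ← Complex.exp_add]
  congr 2
  push_cast
  ring

/-- The Fourier transform intertwines the dilation with its inverse: `S 𝓕 S = 𝓕`. -/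
lemma dilate_fourier_dilate (hbar : ℝ) (𝓕 : HL2 ≃ₗᵢ[ℂ] HL2)
    (h𝓕 : ∀ f : HL2, Integrable (⇑f) volume → ⇑(𝓕 f) =ᵐ[volume] fourierFormula hbar (⇑f))
    (S : HL2 →L[ℂ] HL2)
    (hS : ∀ f : HL2, ⇑(S f) =ᵐ[volume] fun x => ((Real.sqrt 2 : ℝ) : ℂ)⁻¹ * f (x / 2))
    (f : HL2) : S (𝓕 (S f)) = 𝓕 f := by
  have hc := 𝓕.continuous
  refine eq_of_eq_on_integrable (φ := fun f => S (𝓕 (S f))) (ψ := fun f => 𝓕 f)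
    (by fun_prop) (by fun_prop) (fun f hf => Lp.ext ?_) f
  have hi : Integrable (⇑(S f)) volume :=
    ((hf.comp_div (by norm_num : (2 : ℝ) ≠ 0)).const_mul _).congr (hS f).symm
  filter_upwards [hS (𝓕 (S f)), ae_comp_half (h𝓕 _ hi), h𝓕 f hf] with p h1 h2 h3
  rw [h1, h2, h3, fourierFormula_congr hbar (hS f), fourierFormula, fourierFormula,
    mul_left_comm]
  congr 1
  have hsc := Measure.integral_comp_div (fun x : ℝ => ((Real.sqrt 2 : ℝ) : ℂ)⁻¹ *
    (Complex.exp (-(Complex.I * (p : ℂ) * (x : ℂ) / (hbar : ℂ))) * f x)) 2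
  have h22 : ((Real.sqrt 2 : ℝ) : ℂ) * ((Real.sqrt 2 : ℝ) : ℂ) = 2 := by
    rw [← Complex.ofReal_mul, Real.mul_self_sqrt (by norm_num)]; norm_num
  have hne : ((Real.sqrt 2 : ℝ) : ℂ) ≠ 0 := by
    intro h; rw [h] at h22; norm_num at h22
  have hcg : (∫ x : ℝ, Complex.exp (-(Complex.I * ((p / 2 : ℝ) : ℂ) * (x : ℂ) / (hbar : ℂ))) *
      (((Real.sqrt 2 : ℝ) : ℂ)⁻¹ * f (x / 2))) = ∫ x : ℝ, ((Real.sqrt 2 : ℝ) : ℂ)⁻¹ *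
    (Complex.exp (-(Complex.I * (p : ℂ) * ((x / 2 : ℝ) : ℂ) / (hbar : ℂ))) * f (x / 2)) := by
    congr 1; ext x
    rw [show Complex.I * ((p / 2 : ℝ) : ℂ) * (x : ℂ) = Complex.I * (p : ℂ) * ((x / 2 : ℝ) : ℂ) by
      push_cast; ring]
    ring
  rw [hcg, hsc, integral_const_mul, abs_of_pos (by norm_num : (0 : ℝ) < 2), Complex.real_smul]
  rw [Complex.ofReal_ofNat, ← h22]
  field_simp

/-! ### Isometry and time reversal -/

lemma norm_dilate (S : HL2 →L[ℂ] HL2)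
    (hS : ∀ f : HL2, ⇑(S f) =ᵐ[volume] fun x => ((Real.sqrt 2 : ℝ) : ℂ)⁻¹ * f (x / 2))
    (f : HL2) : ‖S f‖ = ‖f‖ := by
  suffices h : (inner ℂ (S f) (S f) : ℂ) = inner ℂ f f by
    rw [inner_self_eq_norm_sq_to_K, inner_self_eq_norm_sq_to_K] at h
    have h' : ‖S f‖ ^ 2 = ‖f‖ ^ 2 := by exact_mod_cast h
    exact (sq_eq_sq₀ (norm_nonneg _) (norm_nonneg _)).1 h'
  rw [L2.inner_def, L2.inner_def]
  have hsc := Measure.integral_comp_div (fun x : ℝ => (2 : ℂ)⁻¹ * inner ℂ (f x) (f x)) 2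
  have h22 : ((Real.sqrt 2 : ℝ) : ℂ) * ((Real.sqrt 2 : ℝ) : ℂ) = 2 := by
    rw [← Complex.ofReal_mul, Real.mul_self_sqrt (by norm_num)]; norm_num
  calc _ = ∫ x : ℝ, (2 : ℂ)⁻¹ * inner ℂ (f (x / 2)) (f (x / 2)) := by
        refine integral_congr_ae ?_
        filter_upwards [hS f] with x hx
        rw [hx, RCLike.inner_apply, RCLike.inner_apply, ← h22]
        simp only [map_mul, map_inv₀, Complex.conj_ofReal]
        ring
    _ = _ := by
        rw [hsc, integral_const_mul, abs_of_pos (by norm_num : (0 : ℝ) < 2), Complex.real_smul,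
          Complex.ofReal_ofNat, mul_inv_cancel_left₀ two_ne_zero]

lemma norm_eq_of_ae {f g : HL2} (h : ∀ᵐ x, ‖f x‖ = ‖g x‖) : ‖f‖ = ‖g‖ := by
  rw [Lp.norm_def, Lp.norm_def, eLpNorm_congr_norm_ae h]

/-- Time-reversal symmetry of the quantum baker's map: with `Ω f := conj(𝓕 f)` (an
antilinear involution of `L²(ℝ)`), the baker's map propagator
`F = S (L + X^{−1} R)(E_p + Y^{−1/2} O_p)` satisfies `Ω F Ω = F*`. -/
theorem bakerPropagator_time_reversal (hbar : ℝ) (hhb : 0 < hbar)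
    (𝓕 : HL2 ≃ₗᵢ[ℂ] HL2)
    (h𝓕 : ∀ f : HL2, Integrable (⇑f) volume → ⇑(𝓕 f) =ᵐ[volume] fourierFormula hbar (⇑f))
    (L R Ep Op S : HL2 →L[ℂ] HL2) (X Y : ℝ → HL2 →L[ℂ] HL2)
    (hL : ∀ f : HL2, ⇑(L f) =ᵐ[volume] fun x => chiL x * f x)
    (hR : ∀ f : HL2, ⇑(R f) =ᵐ[volume] fun x => chiR x * f x)
    (hEp : ∀ f : HL2, ⇑(𝓕 (Ep f)) =ᵐ[volume] fun p => chiE p * (𝓕 f) p)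
    (hOp : ∀ f : HL2, ⇑(𝓕 (Op f)) =ᵐ[volume] fun p => chiO p * (𝓕 f) p)
    (hX : ∀ s : ℝ, ∀ f : HL2,
      ⇑(X s f) =ᵐ[volume] fun x => Complex.exp (Complex.I * s * x / hbar) * f x)
    (hY : ∀ s : ℝ, ∀ f : HL2, ⇑(Y s f) =ᵐ[volume] fun x => f (x + s))
    (hS : ∀ f : HL2, ⇑(S f) =ᵐ[volume] fun x => ((Real.sqrt 2 : ℝ) : ℂ)⁻¹ * f (x / 2))
    (Ω : HL2 → HL2)
    (hΩ : ∀ f : HL2, ⇑(Ω f) =ᵐ[volume] fun x => (starRingEnd ℂ) ((𝓕 f) x)) :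
    ∀ f : HL2,
      Ω ((S ∘L (L + X (-1) ∘L R) ∘L (Ep + Y (-(1/2)) ∘L Op)) (Ω f))
        = ContinuousLinearMap.adjoint
            (S ∘L (L + X (-1) ∘L R) ∘L (Ep + Y (-(1/2)) ∘L Op)) f := by
  set A : HL2 →L[ℂ] HL2 := L + X (-1) ∘L R with hAdef
  set B : HL2 →L[ℂ] HL2 := Ep + Y (-(1/2)) ∘L Op with hBdef
  have hA : ∀ f : HL2, ⇑(A f) =ᵐ[volume] fun x => posPhase hbar x * f x := by
    intro f
    have hAf : A f = L f + X (-1) (R f) := rfl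
    rw [hAf]
    filter_upwards [Lp.coeFn_add (L f) (X (-1) (R f)), hL f, hX (-1) (R f), hR f]
      with x h1 h2 h3 h4
    rw [h1, Pi.add_apply, h2, h3, h4, posPhase]
    ring
  have hB : ∀ f : HL2, ⇑(𝓕 (B f)) =ᵐ[volume] fun p => momPhase hbar p * (𝓕 f) p := by
    intro f
    have hBf : 𝓕 (B f) = 𝓕 (Ep f) + X (-(1/2)) (𝓕 (Op f)) := by
      rw [← fourier_translate hbar 𝓕 h𝓕 (-(1/2)) (X (-(1/2))) (Y (-(1/2))) (hX _) (hY _),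
        ← map_add]
      rfl
    rw [hBf]
    filter_upwards [Lp.coeFn_add (𝓕 (Ep f)) (X (-(1/2)) (𝓕 (Op f))), hEp f,
      hX (-(1/2)) (𝓕 (Op f)), hOp f] with x h1 h2 h3 h4
    rw [h1, Pi.add_apply, h2, h3, h4, momPhase]
    ring
  have hΩ' : ∀ f, Ω f = star (𝓕 f) := by
    intro f
    refine Lp.ext ?_
    filter_upwards [hΩ f, Lp.coeFn_star (𝓕 f)] with x h1 h2
    rw [h1, h2]; rfl
  have hsF := star_fourier hbar 𝓕 h𝓕
  have hFΩ : ∀ f, 𝓕 (Ω f) = star f := fun f => by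
    rw [hΩ', hsF, 𝓕.apply_symm_apply]
  have hΩΩ : ∀ f, Ω (Ω f) = f := fun f => by
    rw [hΩ' (Ω f), hFΩ, star_star]
  have hSFS := dilate_fourier_dilate hbar 𝓕 h𝓕 S hS
  have hSn := norm_dilate S hS
  have hSFS' : ∀ f, S (𝓕.symm (S f)) = 𝓕.symm f := by
    intro f
    have hinj : Function.Injective S :=
      (AddMonoidHomClass.isometry_of_norm S hSn).injective
    -- `S 𝓕 S = 𝓕` makes `S` onto, with inverse `𝓕 S 𝓕⁻¹`.
    obtain ⟨u, hu⟩ : ∃ u, u = 𝓕 (S (𝓕.symm (S f))) := ⟨_, rfl⟩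
    have huf : u = f := hinj (by rw [hu, hSFS, 𝓕.apply_symm_apply])
    rw [LinearIsometryEquiv.eq_symm_apply, ← hu, huf]
  have hBn : ∀ f, ‖B f‖ = ‖f‖ := fun f => by
    rw [← 𝓕.norm_map (B f), ← 𝓕.norm_map f]
    refine norm_eq_of_ae ?_
    filter_upwards [hB f] with x hx
    rw [hx, norm_mul, momPhase_eq, norm_posPhase, one_mul]
  have hAn : ∀ f, ‖A f‖ = ‖f‖ := fun f => by
    refine norm_eq_of_ae ?_
    filter_upwards [hA f] with x hx
    rw [hx, norm_mul, norm_posPhase, one_mul]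
  have hUU := (ContinuousLinearMap.norm_map_iff_adjoint_comp_self (S ∘L A ∘L B)).1
    fun f => by simp [hSn, hAn, hBn]
  have hSmul : ∀ f g : HL2, (⇑g =ᵐ[volume] fun x => posPhase hbar x * f x) →
      ⇑(S g) =ᵐ[volume] fun x => momPhase hbar x * (S f) x := by
    intro f g h
    filter_upwards [ae_comp_half h, hS g, hS f] with x h1 h2 h3
    rw [h2, h1, h3, momPhase_eq]
    ring
  have hmm : ∀ x, momPhase hbar x * star (momPhase hbar x) = 1 := fun x => by
    rw [momPhase_eq]; exact mul_conj_of_norm_one (norm_posPhase _ _)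
  have hStar : ∀ f, star (S f) = S (star f) := by
    intro f
    refine Lp.ext ?_
    filter_upwards [Lp.coeFn_star (S f), hS f, hS (star f), ae_comp_half (Lp.coeFn_star f)]
      with x h1 h2 h3 h4
    rw [h1, h3, h4, Pi.star_apply, Pi.star_apply, h2]
    simp
  have hinner : ∀ h, B (Ω (S (A (B h)))) = 𝓕.symm (S (star (B h))) := by
    intro h
    rw [LinearIsometryEquiv.eq_symm_apply]
    refine Lp.ext ?_
    have h1 := hB (Ω (S (A (B h))))
    rw [hFΩ] at h1
    rw [← hStar]
    filter_upwards [h1, Lp.coeFn_star (S (A (B h))), hSmul _ _ (hA (B h)),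
      Lp.coeFn_star (S (B h))] with x h1 h2 h3 h4
    rw [h1, h2, h4, Pi.star_apply, Pi.star_apply, h3, star_mul', ← mul_assoc, hmm, one_mul]
  have hmain : ∀ h, S (A (B (Ω (S (A (B h)))))) = Ω h := by
    intro h
    rw [hinner]
    refine Lp.ext ?_
    have h1 := hSmul _ _ (hA (𝓕.symm (S (star (B h)))))
    rw [hSFS', ← hsF] at h1
    rw [hΩ']
    filter_upwards [h1, Lp.coeFn_star (𝓕 (B h)), hB h, Lp.coeFn_star (𝓕 h)] with x h1 h2 h3 h4
    rw [h1, h2, h4, Pi.star_apply, Pi.star_apply, h3, star_mul', ← mul_assoc, hmm, one_mul]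
  intro f
  have hf : (S ∘L A ∘L B) (Ω ((S ∘L A ∘L B) (Ω f))) = f := by
    have := hmain (Ω f)
    rwa [hΩΩ] at this
  have hadj := congrArg (fun T : HL2 →L[ℂ] HL2 => T (Ω ((S ∘L A ∘L B) (Ω f)))) hUU
  simp only [ContinuousLinearMap.comp_apply, one_apply_eq_self] at hadj hf ⊢
  rw [hf] at hadj
  exact hadj.symm

end
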